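/- Let X be a complex Banach space. For every q ∈ (0,∞) there exists a constant C_q ∈ (0,∞) such that for every n,d ∈ ℕ with 1 ≤ d ≤ n, every function f : {-1,1}^n → X of degree at most d satisfies Ent(‖f‖_X^q) ≤ C_q · d · ‖f‖_{L_q({-1,1}^n;X)}^q. -/

import Mathlib

open scoped BigOperators ENNReal NNReal

noncomputable section

namespace HammingCube

variable {X : Type*} [NormedAddCommGroup X] [NormedSpace ℂ X]

/-- The sign ±1 associated to a boolean coordinate. -/
def sgn (b : Bool) : ℝ := if b then 1 else -1

/-- The Walsh function `w_A(ε) = ∏_{i ∈ A} ε_i`. -/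
def walsh {n : ℕ} (A : Finset (Fin n)) (ε : Fin n → Bool) : ℝ := ∏ i ∈ A, sgn (ε i)

/-- The Fourier–Walsh coefficient `f̂(A) = 2⁻ⁿ ∑_δ f(δ) w_A(δ)`. -/
def coeff {n : ℕ} (f : (Fin n → Bool) → X) (A : Finset (Fin n)) : X :=
  (2 ^ n : ℝ)⁻¹ • ∑ δ : Fin n → Bool, walsh A δ • f δ

/-- `f` has degree at most `d`: `f̂(A) = 0` whenever `|A| > d`. -/
def degLE {n : ℕ} (f : (Fin n → Bool) → X) (d : ℕ) : Prop :=
  ∀ A : Finset (Fin n), d < A.card → coeff f A = 0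

/-- `f` belongs to the `d`-th tail space: `f̂(A) = 0` whenever `|A| < d`. -/
def tailSpace {n : ℕ} (f : (Fin n → Bool) → X) (d : ℕ) : Prop :=
  ∀ A : Finset (Fin n), A.card < d → coeff f A = 0

/-- The heat semigroup `e^{-tΔ} f = ∑_A e^{-t|A|} f̂(A) w_A`. -/
def heat {n : ℕ} (t : ℝ) (f : (Fin n → Bool) → X) : (Fin n → Bool) → X :=
  fun ε => ∑ A : Finset (Fin n), Real.exp (-t * A.card) • walsh A ε • coeff f A

/-- The hypercube Laplacian `Δ f = ∑_A |A| f̂(A) w_A`. -/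
def lap {n : ℕ} (f : (Fin n → Bool) → X) : (Fin n → Bool) → X :=
  fun ε => ∑ A : Finset (Fin n), (A.card : ℝ) • walsh A ε • coeff f A

/-- The fractional Laplacian `Δ^γ f = ∑_A |A|^γ f̂(A) w_A`. -/
def fracLap {n : ℕ} (γ : ℝ) (f : (Fin n → Bool) → X) : (Fin n → Bool) → X :=
  fun ε => ∑ A : Finset (Fin n), ((A.card : ℝ) ^ γ) • walsh A ε • coeff f A

/-- The `i`-th discrete partial derivative. -/
def pderiv {n : ℕ} (i : Fin n) (f : (Fin n → Bool) → X) : (Fin n → Bool) → X :=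
  fun ε => (2 : ℝ)⁻¹ • (f ε - f (Function.update ε i (!(ε i))))

/-- The vector-valued `L_p` norm `(2⁻ⁿ ∑_ε ‖f(ε)‖^p)^{1/p}` for finite `p`. -/
def lpNorm {n : ℕ} {Y : Type*} [NormedAddCommGroup Y] (p : ℝ)
    (f : (Fin n → Bool) → Y) : ℝ :=
  ((2 ^ n : ℝ)⁻¹ * ∑ ε : Fin n → Bool, ‖f ε‖ ^ p) ^ (1 / p)

/-- The `L_∞` norm `max_ε ‖f(ε)‖`. -/
def linfNorm {n : ℕ} {Y : Type*} [NormedAddCommGroup Y]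
    (f : (Fin n → Bool) → Y) : ℝ :=
  ⨆ ε : Fin n → Bool, ‖f ε‖

/-- The `L_p` norm for `p ∈ [1,∞]` encoded as `p : ℝ≥0∞`. -/
def lpNormE {n : ℕ} {Y : Type*} [NormedAddCommGroup Y] (p : ℝ≥0∞)
    (f : (Fin n → Bool) → Y) : ℝ :=
  if p = ⊤ then linfNorm f else lpNorm p.toReal f

/-- The scalar `L_p` norm of the gradient `‖(∑_i |∂_i f|²)^{1/2}‖_{L_p}`. -/
def gradLpNorm {n : ℕ} (p : ℝ) (f : (Fin n → Bool) → ℂ) : ℝ :=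
  lpNorm p (fun ε => Real.sqrt (∑ i : Fin n, ‖pderiv i f ε‖ ^ 2))

/-- The Rademacher projection `Rad f(ε) = ∑_i f̂({i}) ε_i`. -/
def Rad {n : ℕ} (f : (Fin n → Bool) → X) : (Fin n → Bool) → X :=
  fun ε => ∑ i : Fin n, sgn (ε i) • coeff f {i}

/-- A complex Banach space is `K`-convex if the Rademacher projections are uniformly
bounded on `L_q` for some `q ∈ (1,∞)`. -/
def KConvex (X : Type*) [NormedAddCommGroup X] [NormedSpace ℂ X] : Prop :=
  ∃ q : ℝ, 1 < q ∧ ∃ M : ℝ, ∀ (n : ℕ) (f : (Fin n → Bool) → X),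
    lpNorm q (Rad f) ≤ M * lpNorm q f

/-- `X` has cotype `q` with constant `C`. -/
def HasCotype (X : Type*) [NormedAddCommGroup X] [NormedSpace ℂ X] (q C : ℝ) : Prop :=
  ∀ (n : ℕ) (x : Fin n → X),
    C⁻¹ * (∑ i : Fin n, ‖x i‖ ^ q) ^ (1 / q) ≤
      ((2 ^ n : ℝ)⁻¹ * ∑ ε : Fin n → Bool, ‖∑ i : Fin n, sgn (ε i) • x i‖ ^ q) ^ (1 / q)

/-- The entropy `Ent(h)` of a nonnegative function on the cube. -/
def entropy {n : ℕ} (h : (Fin n → Bool) → ℝ) : ℝ :=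
  (2 ^ n : ℝ)⁻¹ * ∑ ε : Fin n → Bool, h ε * Real.log (h ε) -
    ((2 ^ n : ℝ)⁻¹ * ∑ ε : Fin n → Bool, h ε) *
      Real.log ((2 ^ n : ℝ)⁻¹ * ∑ ε : Fin n → Bool, h ε)

/-- The `L_∞` norm of the gradient `max_ε (∑_i |∂_i f(ε)|²)^{1/2}`. -/
def gradLinfNorm {n : ℕ} (f : (Fin n → Bool) → ℂ) : ℝ :=
  ⨆ ε : Fin n → Bool, Real.sqrt (∑ i : Fin n, ‖pderiv i f ε‖ ^ 2)

/-! If `𝔼 h² ≤ K (𝔼 h)²`, then Jensen's inequality for `log` gives `Ent h ≤ log K · 𝔼 h`. For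
`h = ‖f‖ ^ p` with `p ≥ 2` such a moment comparison holds with `K = C ^ d`: the map `r ↦ T_r f` is
a polynomial of degree at most `d` with `T_1 f = f`, so `f` is recovered with a loss of `9 ^ d` by
extrapolating to `r = 1` from the `d + 1` nodes `j / (2 d) ∈ [0, 1 / 2]`. For such `r` the noise
operator is hypercontractive from `L_2` to `L_4`, hence from `L_p` to `L_{2p}` for vector-valued
functions. As `log K` is linear in `d`, this is the bound for `q ≥ 2`. For `q < 2` it follows from
the case `2`, since `t ↦ Ent (h ^ t) / 𝔼 (h ^ t)` is nondecreasing. -/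

section ForwardDifference

open Finset

variable {M R E : Type*}

lemma norm_fwdDiff_iter_le [AddCommMonoid M] [SeminormedAddCommGroup E] {f : M → E} {h y : M}
    {B : ℝ} {i : ℕ} (hB : ∀ j ≤ i, ‖f (y + j • h)‖ ≤ B) : ‖(fwdDiff h)^[i] f y‖ ≤ 2 ^ i * B := by
  induction i generalizing y with
  | zero => simpa using hB 0 le_rfl
  | succ i ih =>
    have h_shift : ‖(fwdDiff h)^[i] f (y + h)‖ ≤ 2 ^ i * B :=
      ih fun j hj ↦ by simpa [succ_nsmul', add_assoc] using hB (j + 1) (by lia)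
    have h_base : ‖(fwdDiff h)^[i] f y‖ ≤ 2 ^ i * B := ih fun j hj ↦ hB j (by lia)
    rw [Function.iterate_succ_apply', fwdDiff]
    calc ‖(fwdDiff h)^[i] f (y + h) - (fwdDiff h)^[i] f y‖ ≤ 2 ^ i * B + 2 ^ i * B :=
          (norm_sub_le _ _).trans (add_le_add h_shift h_base)
      _ = 2 ^ (i + 1) * B := by ring

lemma norm_add_nsmul_le_of_fwdDiff_iter_eq_zero [AddCommMonoid M] [SeminormedAddCommGroup E]
    {f : M → E} {h y : M} {B : ℝ} {d : ℕ} (hf : ∀ i, d < i → (fwdDiff h)^[i] f y = 0)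
    (hB : ∀ j ≤ d, ‖f (y + j • h)‖ ≤ B) (N : ℕ) : ‖f (y + N • h)‖ ≤ 3 ^ N * B := by
  have hB0 : 0 ≤ B := (norm_nonneg _).trans (hB 0 d.zero_le)
  have h_diff (i : ℕ) : ‖(fwdDiff h)^[i] f y‖ ≤ 2 ^ i * B := by
    rcases le_or_gt i d with hi | hi
    · exact norm_fwdDiff_iter_le fun j hj ↦ hB j (hj.trans hi)
    · rw [hf i hi, norm_zero]
      positivity
  calc ‖f (y + N • h)‖ = ‖∑ i ∈ range (N + 1), N.choose i • (fwdDiff h)^[i] f y‖ := by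
        rw [shift_eq_sum_fwdDiff_iter h f N y]
    _ ≤ ∑ i ∈ range (N + 1), N.choose i * (2 ^ i * B) :=
        norm_sum_le_of_le _ fun i _ ↦ norm_nsmul_le.trans (by gcongr; exact h_diff i)
    _ = (2 + 1) ^ N * B := by
        rw [add_pow, sum_mul]
        exact sum_congr rfl fun i _ ↦ by ring
    _ = 3 ^ N * B := by norm_num

lemma fwdDiff_iter_smul_const [AddCommMonoid M] [Ring R] [AddCommGroup E] [Module R E] (h : M)
    (g : M → R) (x : E) (m : ℕ) :
    (fwdDiff h)^[m] (fun t ↦ g t • x) = fun t ↦ (fwdDiff h)^[m] g t • x := by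
  induction m with
  | zero => rfl
  | succ m ih =>
    simp only [Function.iterate_succ_apply', ih]
    funext t
    simp only [fwdDiff, sub_smul]

lemma fwdDiff_iter_sum_pow_smul_eq_zero {ι : Type*} [CommRing R] [AddCommGroup E] [Module R E]
    {s : Finset ι} {k : ι → ℕ} (x : ι → E) {m : ℕ} (hk : ∀ i ∈ s, k i < m) :
    (fwdDiff 1)^[m] (fun t : R ↦ ∑ i ∈ s, t ^ k i • x i) = 0 := by
  rw [← sum_fn, fwdDiff_iter_finsetSum]
  refine sum_eq_zero fun i hi ↦ ?_
  rw [fwdDiff_iter_smul_const, fwdDiff_iter_pow_eq_zero_of_lt (hk i hi)]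
  simp only [Pi.zero_apply, zero_smul]
  rfl

/- Newton extrapolation from the nodes `0, …, d` to `2 * d`, after rescaling the variable so that
the nodes lie in `[0, 1 / 2]` and the target is `1`. -/
lemma exists_norm_sum_le_mul_norm_sum_pow_smul {ι : Type*} [SeminormedAddCommGroup E]
    [NormedSpace ℝ E] {s : Finset ι} {k : ι → ℕ} {d : ℕ} (hd : 1 ≤ d) (hk : ∀ i ∈ s, k i ≤ d)
    (x : ι → E) :
    ∃ j ≤ d, ‖∑ i ∈ s, x i‖ ≤ 9 ^ d * ‖∑ i ∈ s, ((j : ℝ) / (2 * d)) ^ k i • x i‖ := by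
  set P : ℝ → E := fun t ↦ ∑ i ∈ s, (t / (2 * d)) ^ k i • x i with hP
  have hP_pow : P = fun t ↦ ∑ i ∈ s, t ^ k i • (((2 * d : ℝ) ^ k i)⁻¹ • x i) := by
    simp only [hP, div_eq_mul_inv, mul_pow, inv_pow, mul_smul]
  have hP_diff (i : ℕ) (hi : d < i) : (fwdDiff 1)^[i] P 0 = 0 := by
    rw [hP_pow, fwdDiff_iter_sum_pow_smul_eq_zero _ fun j hj ↦ (hk j hj).trans_lt hi,
      Pi.zero_apply]
  have hP_target : P (0 + (2 * d) • 1) = ∑ i ∈ s, x i := by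
    have : (2 * d : ℝ) ≠ 0 := by positivity
    simp [hP, this]
  obtain ⟨j, hj, hmax⟩ := exists_max_image (range (d + 1)) (fun j : ℕ ↦ ‖P j‖) ⟨0, by simp⟩
  refine ⟨j, by simpa [Nat.lt_succ_iff] using hj, ?_⟩
  calc ‖∑ i ∈ s, x i‖ = ‖P (0 + (2 * d) • 1)‖ := by rw [hP_target]
    _ ≤ 3 ^ (2 * d) * ‖P j‖ := norm_add_nsmul_le_of_fwdDiff_iter_eq_zero hP_diff
        (fun i hi ↦ by simpa using hmax i (by simpa [Nat.lt_succ_iff] using hi)) _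
    _ = 9 ^ d * ‖P j‖ := by rw [pow_mul]; norm_num

end ForwardDifference

section Entropy

open Finset Real

lemma expect_mul_log_le {ι : Type*} {s : Finset ι} {w y : ι → ℝ} (hw : ∀ i ∈ s, 0 ≤ w i)
    (hy : ∀ i ∈ s, 0 < w i → 0 < y i) :
    𝔼 i ∈ s, w i * log (y i) ≤
      (𝔼 i ∈ s, w i) * log ((𝔼 i ∈ s, w i * y i) / 𝔼 i ∈ s, w i) := by
  rcases (expect_nonneg hw).eq_or_lt with hW | hW
  · have hw0 := (expect_eq_zero_iff_of_nonneg hw).1 hW.symm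
    rw [← hW, zero_mul, expect_eq_zero fun i hi ↦ by rw [hw0 i hi, zero_mul]]
  have hwy (i) (hi : i ∈ s) : 0 ≤ w i * y i := by
    rcases (hw i hi).eq_or_lt with h | h
    · simp [← h]
    · exact (mul_pos h (hy i hi h)).le
  have hWY : 0 < 𝔼 i ∈ s, w i * y i := by
    obtain ⟨i, hi, hi0⟩ := exists_ne_zero_of_expect_ne_zero hW.ne'
    have hwi := (hw i hi).lt_of_ne' hi0
    exact expect_pos' hwy ⟨i, hi, mul_pos hwi (hy i hi hwi)⟩
  set W := 𝔼 i ∈ s, w i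
  set m := (𝔼 i ∈ s, w i * y i) / W with hm
  have hm0 : 0 < m := div_pos hWY hW
  have tangent (i) (hi : i ∈ s) : w i * log (y i) ≤ w i * y i / m + w i * (log m - 1) := by
    rcases (hw i hi).eq_or_lt with h | h
    · simp [← h]
    have hlog := log_le_sub_one_of_pos (div_pos (hy i hi h) hm0)
    rw [log_div (hy i hi h).ne' hm0.ne'] at hlog
    calc w i * log (y i) ≤ w i * (y i / m + (log m - 1)) := by gcongr; linarith
      _ = w i * y i / m + w i * (log m - 1) := by ring
  calc 𝔼 i ∈ s, w i * log (y i)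
      ≤ 𝔼 i ∈ s, (w i * y i / m + w i * (log m - 1)) := expect_le_expect tangent
    _ = (𝔼 i ∈ s, w i * y i) / m + W * (log m - 1) := by
        rw [expect_add_distrib, expect_div, expect_mul]
    _ = W * log m := by rw [hm]; field_simp; ring

variable {n : ℕ} {h : (Fin n → Bool) → ℝ}

lemma inv_two_pow_mul_sum (h : (Fin n → Bool) → ℝ) : (2 ^ n : ℝ)⁻¹ * ∑ ε, h ε = 𝔼 ε, h ε := by
  rw [Fintype.expect_eq_sum_div_card, div_eq_inv_mul]
  simp

lemma entropy_eq_expect (h : (Fin n → Bool) → ℝ) :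
    entropy h = 𝔼 ε, h ε * log (h ε) - (𝔼 ε, h ε) * log (𝔼 ε, h ε) := by
  simp only [entropy, inv_two_pow_mul_sum]

lemma lpNorm_rpow_self {E : Type*} [NormedAddCommGroup E] {q : ℝ} (hq : q ≠ 0)
    (f : (Fin n → Bool) → E) : lpNorm q f ^ q = 𝔼 ε, ‖f ε‖ ^ q := by
  have h_nonneg : 0 ≤ 𝔼 ε, ‖f ε‖ ^ q := expect_nonneg fun ε _ ↦ by positivity
  rw [lpNorm, inv_two_pow_mul_sum, one_div, rpow_inv_rpow h_nonneg hq]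

lemma eq_zero_or_expect_pos (hh : 0 ≤ h) : h = 0 ∨ 0 < 𝔼 ε, h ε :=
  (expect_nonneg fun ε _ ↦ hh ε).eq_or_lt.imp_left
    fun h0 ↦ (Fintype.expect_eq_zero_iff_of_nonneg hh).1 h0.symm

lemma entropy_le_log_mul_expect_of_expect_sq_le (hh : 0 ≤ h) {K : ℝ}
    (hK : 𝔼 ε, h ε ^ 2 ≤ K * (𝔼 ε, h ε) ^ 2) : entropy h ≤ log K * 𝔼 ε, h ε := by
  rcases eq_zero_or_expect_pos hh with rfl | hpos
  · simp [entropy]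
  have jensen := expect_mul_log_le (s := univ) (w := h) (y := h) (fun ε _ ↦ hh ε) fun _ _ ↦ id
  simp only [← pow_two] at jensen
  rw [entropy_eq_expect]
  set G := 𝔼 ε, h ε
  have hsq : 0 < 𝔼 ε, h ε ^ 2 := by
    obtain ⟨ε, -, hε⟩ := exists_ne_zero_of_expect_ne_zero hpos.ne'
    exact expect_pos' (fun _ _ ↦ sq_nonneg _) ⟨ε, mem_univ ε, by positivity⟩
  have hK0 : 0 < K := pos_of_mul_pos_left (hsq.trans_le hK) (sq_nonneg G)
  have hratio : (𝔼 ε, h ε ^ 2) / G ≤ K * G := by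
    rw [div_le_iff₀ hpos]
    linarith
  have hlog : log ((𝔼 ε, h ε ^ 2) / G) ≤ log K + log G := by
    rw [← log_mul hK0.ne' hpos.ne']
    exact log_le_log (by positivity) hratio
  linarith [mul_le_mul_of_nonneg_left hlog hpos.le]

lemma log_rpow_of_nonneg {x : ℝ} (hx : 0 ≤ x) (y : ℝ) : log (x ^ y) = y * log x := by
  rcases hx.eq_or_lt with rfl | hx
  · rcases eq_or_ne y 0 with rfl | hy <;> simp [*]
  · exact log_rpow hx y

/- The graph of the convex function `t ↦ log (𝔼 ε, h ε ^ t)` lies above its tangent at `a`. -/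
lemma sub_mul_expect_rpow_mul_log_le (hh : 0 ≤ h) {a b : ℝ} (ha : a ≠ 0) (hb : b ≠ 0) :
    (b - a) * 𝔼 ε, h ε ^ a * log (h ε) ≤
      (𝔼 ε, h ε ^ a) * log ((𝔼 ε, h ε ^ b) / 𝔼 ε, h ε ^ a) := by
  have hpos (ε) (hε : 0 < h ε ^ a) : 0 < h ε :=
    (hh ε).lt_of_ne' fun h0 ↦ by simp [h0, zero_rpow ha] at hε
  have h_rpow (ε) : h ε ^ a * h ε ^ (b - a) = h ε ^ b := by
    rw [← rpow_add' (hh ε) (by simpa using hb), add_sub_cancel]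
  have jensen := expect_mul_log_le (s := univ) (y := fun ε ↦ h ε ^ (b - a))
    (fun ε _ ↦ rpow_nonneg (hh ε) a) fun ε _ hε ↦ rpow_pos_of_pos (hpos ε hε) _
  simpa only [h_rpow, log_rpow_of_nonneg (hh _), mul_left_comm _ (b - a), ← mul_expect]
    using jensen

/- With `D t = entropy (h ^ t) / 𝔼 (h ^ t)`, the relative entropy of the probability density
proportional to `h ^ t`, this says that `D s ≤ D 1`. -/
lemma expect_mul_entropy_rpow_le (hh : 0 ≤ h) {s : ℝ} (hs0 : 0 < s) (hs1 : s ≤ 1) :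
    (𝔼 ε, h ε) * entropy (fun ε ↦ h ε ^ s) ≤ (𝔼 ε, h ε ^ s) * entropy h := by
  rcases hs1.eq_or_lt with rfl | hs1
  · simp
  rcases eq_zero_or_expect_pos hh with rfl | hG
  · simp [zero_rpow hs0.ne']
  have hS : 0 < 𝔼 ε, h ε ^ s := by
    obtain ⟨ε, -, hε⟩ := exists_ne_zero_of_expect_ne_zero hG.ne'
    have hε_pos : 0 < h ε := (hh ε).lt_of_ne' hε
    exact expect_pos' (fun ε _ ↦ rpow_nonneg (hh ε) s) ⟨ε, mem_univ ε, by positivity⟩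
  have tangent_one := sub_mul_expect_rpow_mul_log_le hh one_ne_zero hs0.ne'
  have tangent_s := sub_mul_expect_rpow_mul_log_le hh hs0.ne' one_ne_zero
  simp only [rpow_one] at tangent_one tangent_s
  rw [log_div hS.ne' hG.ne'] at tangent_one
  rw [log_div hG.ne' hS.ne'] at tangent_s
  simp only [entropy_eq_expect, log_rpow_of_nonneg (hh _), mul_left_comm _ s, ← mul_expect]
  set G := 𝔼 ε, h ε
  set S := 𝔼 ε, h ε ^ s
  set A := 𝔼 ε, h ε * log (h ε)
  set B := 𝔼 ε, h ε ^ s * log (h ε)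
  have tangent_one_mul := mul_le_mul_of_nonneg_left tangent_one hS.le
  have tangent_s_mul := mul_le_mul_of_nonneg_left tangent_s hG.le
  have slope_mono : G * B ≤ S * A := by
    have h_sub : (1 - s) * (G * B) ≤ (1 - s) * (S * A) := by linarith
    exact le_of_mul_le_mul_left h_sub (sub_pos.2 hs1)
  have := mul_le_mul_of_nonneg_left slope_mono hs0.le
  linarith

lemma entropy_rpow_le_of_entropy_le (hh : 0 ≤ h) {s c : ℝ} (hs0 : 0 < s) (hs1 : s ≤ 1)
    (hc : entropy h ≤ c * 𝔼 ε, h ε) :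
    entropy (fun ε ↦ h ε ^ s) ≤ c * 𝔼 ε, h ε ^ s := by
  rcases eq_zero_or_expect_pos hh with rfl | hG
  · simp [entropy, zero_rpow hs0.ne']
  have hS : 0 ≤ 𝔼 ε, h ε ^ s := expect_nonneg fun ε _ ↦ rpow_nonneg (hh ε) s
  refine le_of_mul_le_mul_left ?_ hG
  calc (𝔼 ε, h ε) * entropy (fun ε ↦ h ε ^ s) ≤ (𝔼 ε, h ε ^ s) * entropy h :=
        expect_mul_entropy_rpow_le hh hs0 hs1
    _ ≤ (𝔼 ε, h ε ^ s) * (c * 𝔼 ε, h ε) := by gcongr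
    _ = (𝔼 ε, h ε) * (c * 𝔼 ε, h ε ^ s) := by ring

end Entropy

section Noise

open Finset

variable {E : Type*} [NormedAddCommGroup E] [NormedSpace ℝ E] {n d : ℕ} {r : ℝ}

/-- The Fourier–Walsh coefficient of a function with values in a real vector space. For a complex
space it is definitionally `coeff f A`. -/
def walshCoeff (f : (Fin n → Bool) → E) (A : Finset (Fin n)) : E :=
  (2 ^ n : ℝ)⁻¹ • ∑ δ, walsh A δ • f δ

/-- `f` is a Walsh polynomial of degree at most `d`: the analogue of `degLE` for functions with
values in a real vector space. -/
def HasDegreeLE (f : (Fin n → Bool) → E) (d : ℕ) : Prop :=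
  ∀ A : Finset (Fin n), d < #A → walshCoeff f A = 0

/-- The kernel of the noise operator: the probability that `ε` becomes `δ` when its signs
are flipped independently with probability `(1 - r) / 2` each. -/
def noiseKernel (r : ℝ) (ε δ : Fin n → Bool) : ℝ :=
  ∏ i, (1 + r * (sgn (ε i) * sgn (δ i))) / 2

/-- The noise operator `T_r`, which multiplies the Walsh coefficient at `A` by `r ^ |A|`. It is
`heat t` for `r = exp (-t)`, and makes sense for all real `r`. -/
def noise (r : ℝ) (f : (Fin n → Bool) → E) (ε : Fin n → Bool) : E :=
  ∑ δ, noiseKernel r ε δ • f δ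

lemma sgn_mul_sgn (a b : Bool) : sgn a * sgn b = if a = b then 1 else -1 := by
  cases a <;> cases b <;> simp [sgn]

lemma noiseKernel_nonneg (hr0 : 0 ≤ r) (hr1 : r ≤ 1) (ε δ : Fin n → Bool) :
    0 ≤ noiseKernel r ε δ := by
  refine prod_nonneg fun i _ ↦ ?_
  rw [sgn_mul_sgn]
  split_ifs <;> linarith

lemma sum_noiseKernel (r : ℝ) (ε : Fin n → Bool) : ∑ δ, noiseKernel r ε δ = 1 := by
  calc ∑ δ, noiseKernel r ε δ = ∏ i, ∑ b, (1 + r * (sgn (ε i) * sgn b)) / 2 :=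
        (Fintype.prod_sum fun i b ↦ (1 + r * (sgn (ε i) * sgn b)) / 2).symm
    _ = 1 := prod_eq_one fun i _ ↦ by
        simp only [Fintype.sum_bool, sgn]
        norm_num
        ring

lemma noiseKernel_one (ε δ : Fin n → Bool) : noiseKernel 1 ε δ = if ε = δ then 1 else 0 := by
  unfold noiseKernel
  split_ifs with h
  · refine prod_eq_one fun i _ ↦ ?_
    rw [sgn_mul_sgn, if_pos (congrFun h i)]
    norm_num
  · obtain ⟨i, hi⟩ := Function.ne_iff.mp h
    refine prod_eq_zero (mem_univ i) ?_
    rw [sgn_mul_sgn, if_neg hi]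
    norm_num

lemma noiseKernel_eq_sum_walsh (r : ℝ) (ε δ : Fin n → Bool) :
    noiseKernel r ε δ = ∑ A, r ^ #A * walsh A ε * ((2 ^ n : ℝ)⁻¹ * walsh A δ) := by
  rw [noiseKernel, prod_div_distrib, prod_one_add, powerset_univ, sum_div]
  refine sum_congr rfl fun A _ ↦ ?_
  simp only [prod_mul_distrib, prod_const, card_univ, Fintype.card_fin, walsh]
  ring

lemma noise_one (f : (Fin n → Bool) → E) : noise 1 f = f := by
  funext ε
  simp [noise, noiseKernel_one]

lemma noise_eq_sum_walshCoeff (r : ℝ) (f : (Fin n → Bool) → E) (ε : Fin n → Bool) :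
    noise r f ε = ∑ A, r ^ #A • walsh A ε • walshCoeff f A := by
  simp_rw [noise, noiseKernel_eq_sum_walsh, walshCoeff, sum_smul, smul_sum, smul_smul]
  rw [sum_comm]
  simp only [mul_assoc]

lemma HasDegreeLE.noise_eq_sum {f : (Fin n → Bool) → E} (hf : HasDegreeLE f d) (r : ℝ)
    (ε : Fin n → Bool) :
    noise r f ε = ∑ A with #A ≤ d, r ^ #A • walsh A ε • walshCoeff f A := by
  rw [noise_eq_sum_walshCoeff, sum_filter_of_ne]
  intro A _ hA
  contrapose! hA
  rw [hf A hA, smul_zero, smul_zero]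

lemma HasDegreeLE.exists_norm_le_mul_norm_noise (hd : 1 ≤ d) {f : (Fin n → Bool) → E}
    (hf : HasDegreeLE f d) (ε : Fin n → Bool) :
    ∃ j ≤ d, ‖f ε‖ ≤ 9 ^ d * ‖noise ((j : ℝ) / (2 * d)) f ε‖ := by
  have hf_one : f ε = ∑ A with #A ≤ d, walsh A ε • walshCoeff f A := by
    simpa only [one_pow, one_smul, noise_one] using hf.noise_eq_sum 1 ε
  simp only [hf.noise_eq_sum _ ε, hf_one]
  exact exists_norm_sum_le_mul_norm_sum_pow_smul hd (fun A hA ↦ (mem_filter.1 hA).2) _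

/- `T_r f ε` is an average of the values of `f`, so this is Jensen's inequality for `‖·‖ ^ p`. -/
lemma norm_noise_rpow_le (hr0 : 0 ≤ r) (hr1 : r ≤ 1) {p : ℝ} (hp : 1 ≤ p)
    (f : (Fin n → Bool) → E) (ε : Fin n → Bool) :
    ‖noise r f ε‖ ^ p ≤ noise r (fun δ ↦ ‖f δ‖ ^ p) ε := by
  have hker := noiseKernel_nonneg hr0 hr1 ε
  have h_norm : ‖noise r f ε‖ ≤ ∑ δ, noiseKernel r ε δ * ‖f δ‖ :=
    norm_sum_le_of_le _ fun δ _ ↦ by rw [norm_smul, Real.norm_of_nonneg (hker δ)]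
  calc ‖noise r f ε‖ ^ p ≤ (∑ δ, noiseKernel r ε δ * ‖f δ‖) ^ p := by gcongr
    _ ≤ ∑ δ, noiseKernel r ε δ * ‖f δ‖ ^ p :=
        Real.rpow_arith_mean_le_arith_mean_rpow _ _ _ (fun δ _ ↦ hker δ) (sum_noiseKernel r ε)
          (fun δ _ ↦ norm_nonneg _) hp

end Noise

section Hypercontractivity

open Finset

variable {E : Type*} [NormedAddCommGroup E] [NormedSpace ℝ E] {n d : ℕ} {r : ℝ}

/-- The part `g₀` of the decomposition `f (s, ε) = g₀ ε + s • g₁ ε` with respect to the first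
coordinate `s = ±1`. -/
def headMean (f : (Fin (n + 1) → Bool) → E) (ε : Fin n → Bool) : E :=
  (2 : ℝ)⁻¹ • (f (Fin.cons true ε) + f (Fin.cons false ε))

/-- The part `g₁` of the decomposition `f (s, ε) = g₀ ε + s • g₁ ε` with respect to the first
coordinate `s = ±1`. -/
def headDeriv (f : (Fin (n + 1) → Bool) → E) (ε : Fin n → Bool) : E :=
  (2 : ℝ)⁻¹ • (f (Fin.cons true ε) - f (Fin.cons false ε))

lemma sum_cons {β : Type*} [AddCommMonoid β] (f : (Fin (n + 1) → Bool) → β) :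
    ∑ ε, f ε = ∑ ε, (f (Fin.cons true ε) + f (Fin.cons false ε)) := by
  rw [← (Fin.consEquiv fun _ ↦ Bool).sum_comp, Fintype.sum_prod_type, Fintype.sum_bool,
    sum_add_distrib]
  rfl

lemma expect_headMean (h : (Fin (n + 1) → Bool) → ℝ) : 𝔼 ε, headMean h ε = 𝔼 ε, h ε := by
  simp only [← inv_two_pow_mul_sum, sum_cons h, headMean, smul_eq_mul, ← mul_sum]
  ring

lemma noise_cons (r : ℝ) (f : (Fin (n + 1) → Bool) → E) (s : Bool) (ε : Fin n → Bool) :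
    noise r f (Fin.cons s ε) = noise r (headMean f) ε + (r * sgn s) • noise r (headDeriv f) ε := by
  simp only [noise, sum_cons, smul_sum, ← sum_add_distrib, headMean, headDeriv, noiseKernel,
    Fin.prod_univ_succ, Fin.cons_zero, Fin.cons_succ]
  refine sum_congr rfl fun δ _ ↦ ?_
  simp only [sgn, if_true, Bool.false_eq_true, if_false]
  module

lemma headMean_sq (h : (Fin (n + 1) → Bool) → ℝ) (ε : Fin n → Bool) :
    headMean (fun ε ↦ h ε ^ 2) ε = headMean h ε ^ 2 + headDeriv h ε ^ 2 := by
  simp only [headMean, headDeriv, smul_eq_mul]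
  ring

lemma headMean_noise_pow_four (r : ℝ) (h : (Fin (n + 1) → Bool) → ℝ) (ε : Fin n → Bool) :
    headMean (fun ε ↦ noise r h ε ^ 4) ε = noise r (headMean h) ε ^ 4 +
      6 * r ^ 2 * (noise r (headMean h) ε ^ 2 * noise r (headDeriv h) ε ^ 2) +
      r ^ 4 * noise r (headDeriv h) ε ^ 4 := by
  simp only [headMean, noise_cons, smul_eq_mul, sgn, if_true, Bool.false_eq_true, if_false]
  ring

lemma expect_noise_pow_four_le (hr : r ^ 2 ≤ 1 / 3) (h : (Fin n → Bool) → ℝ) :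
    𝔼 ε, noise r h ε ^ 4 ≤ (𝔼 ε, h ε ^ 2) ^ 2 := by
  induction n with
  | zero => simp [noise, noiseKernel, ← pow_mul]
  | succ n ih =>
    have h_mean := ih (headMean h)
    have h_deriv := ih (headDeriv h)
    have h_sq : 𝔼 ε, h ε ^ 2 = 𝔼 ε, headMean h ε ^ 2 + 𝔼 ε, headDeriv h ε ^ 2 := by
      simp only [← expect_headMean, headMean_sq, expect_add_distrib]
    set p := noise r (headMean h)
    set q := noise r (headDeriv h)
    set a := 𝔼 ε, headMean h ε ^ 2
    set b := 𝔼 ε, headDeriv h ε ^ 2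
    have : 0 ≤ a := expect_nonneg fun _ _ ↦ sq_nonneg _
    have : 0 ≤ b := expect_nonneg fun _ _ ↦ sq_nonneg _
    have h_cross : 𝔼 ε, p ε ^ 2 * q ε ^ 2 ≤ a * b := by
      refine le_of_sq_le_sq ?_ (by positivity)
      calc (𝔼 ε, p ε ^ 2 * q ε ^ 2) ^ 2 ≤ (𝔼 ε, (p ε ^ 2) ^ 2) * 𝔼 ε, (q ε ^ 2) ^ 2 :=
            expect_mul_sq_le_sq_mul_sq _ _ _
        _ = (𝔼 ε, p ε ^ 4) * 𝔼 ε, q ε ^ 4 := by simp only [← pow_mul, Nat.reduceMul]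
        _ ≤ a ^ 2 * b ^ 2 := by gcongr
        _ = (a * b) ^ 2 := by ring
    have hr4 : r ^ 4 ≤ 1 := by nlinarith [sq_nonneg r]
    calc 𝔼 ε, noise r h ε ^ 4
        = 𝔼 ε, p ε ^ 4 + 6 * r ^ 2 * 𝔼 ε, p ε ^ 2 * q ε ^ 2 + r ^ 4 * 𝔼 ε, q ε ^ 4 := by
          rw [← expect_headMean]
          simp only [headMean_noise_pow_four, expect_add_distrib, ← mul_expect, p, q]
      _ ≤ a ^ 2 + 6 * (1 / 3) * (a * b) + 1 * b ^ 2 := by gcongr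
      _ = (𝔼 ε, h ε ^ 2) ^ 2 := by rw [h_sq]; ring

lemma expect_norm_noise_rpow_two_mul_le (hr0 : 0 ≤ r) (hr : r ≤ 1 / 2) {p : ℝ} (hp : 2 ≤ p)
    (f : (Fin n → Bool) → E) :
    𝔼 ε, ‖noise r f ε‖ ^ (2 * p) ≤ (𝔼 ε, ‖f ε‖ ^ p) ^ 2 := by
  have h_four (ε) : ‖noise r f ε‖ ^ (2 * p) = (‖noise r f ε‖ ^ (p / 2)) ^ 4 := by
    rw [← Real.rpow_mul_natCast (norm_nonneg _)]
    congr 1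
    push_cast
    ring
  have h_two (ε) : (‖f ε‖ ^ (p / 2)) ^ 2 = ‖f ε‖ ^ p := by
    rw [← Real.rpow_mul_natCast (norm_nonneg _)]
    congr 1
    push_cast
    ring
  calc 𝔼 ε, ‖noise r f ε‖ ^ (2 * p) = 𝔼 ε, (‖noise r f ε‖ ^ (p / 2)) ^ 4 := by
        simp only [h_four]
    _ ≤ 𝔼 ε, noise r (fun δ ↦ ‖f δ‖ ^ (p / 2)) ε ^ 4 := by
        gcongr with ε
        exact norm_noise_rpow_le hr0 (by linarith) (by linarith) f ε
    _ ≤ (𝔼 ε, (‖f ε‖ ^ (p / 2)) ^ 2) ^ 2 := expect_noise_pow_four_le (by nlinarith) _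
    _ = (𝔼 ε, ‖f ε‖ ^ p) ^ 2 := by simp only [h_two]

lemma HasDegreeLE.norm_rpow_le_mul_sum {f : (Fin n → Bool) → E} (hf : HasDegreeLE f d)
    (hd : 1 ≤ d) {p : ℝ} (hp : 0 ≤ p) (ε : Fin n → Bool) :
    ‖f ε‖ ^ p ≤ (9 ^ p) ^ d * ∑ j ∈ range (d + 1), ‖noise ((j : ℝ) / (2 * d)) f ε‖ ^ p := by
  obtain ⟨j, hj, hfj⟩ := hf.exists_norm_le_mul_norm_noise hd ε
  calc ‖f ε‖ ^ p ≤ (9 ^ d * ‖noise ((j : ℝ) / (2 * d)) f ε‖) ^ p := by gcongr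
    _ = (9 ^ p) ^ d * ‖noise ((j : ℝ) / (2 * d)) f ε‖ ^ p := by
        rw [Real.mul_rpow (by positivity) (norm_nonneg _), Real.rpow_pow_comm (by norm_num)]
    _ ≤ _ := by
        gcongr
        exact single_le_sum (f := fun j : ℕ ↦ ‖noise ((j : ℝ) / (2 * d)) f ε‖ ^ p)
          (fun _ _ ↦ by positivity) (by simpa [Nat.lt_succ_iff] using hj)

lemma HasDegreeLE.expect_norm_rpow_two_mul_le {f : (Fin n → Bool) → E} (hf : HasDegreeLE f d)
    (hd : 1 ≤ d) {p : ℝ} (hp : 2 ≤ p) :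
    𝔼 ε, ‖f ε‖ ^ (2 * p) ≤ (2 * 9 ^ (2 * p)) ^ d * (𝔼 ε, ‖f ε‖ ^ p) ^ 2 := by
  have h_node (j : ℕ) (hj : j ∈ range (d + 1)) :
      𝔼 ε, ‖noise ((j : ℝ) / (2 * d)) f ε‖ ^ (2 * p) ≤ (𝔼 ε, ‖f ε‖ ^ p) ^ 2 := by
    have hjd : (j : ℝ) ≤ d := by exact_mod_cast Nat.lt_succ_iff.1 (mem_range.1 hj)
    refine expect_norm_noise_rpow_two_mul_le (by positivity) ?_ hp f
    rw [div_le_iff₀ (by positivity)]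
    linarith
  have h_nodes : (d + 1 : ℝ) ≤ 2 ^ d := by exact_mod_cast d.lt_two_pow_self
  calc 𝔼 ε, ‖f ε‖ ^ (2 * p)
      ≤ 𝔼 ε, (9 ^ (2 * p)) ^ d *
          ∑ j ∈ range (d + 1), ‖noise ((j : ℝ) / (2 * d)) f ε‖ ^ (2 * p) := by
        gcongr with ε
        exact hf.norm_rpow_le_mul_sum hd (by positivity) ε
    _ = (9 ^ (2 * p)) ^ d *
          ∑ j ∈ range (d + 1), 𝔼 ε, ‖noise ((j : ℝ) / (2 * d)) f ε‖ ^ (2 * p) := by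
        rw [← mul_expect, expect_sum_comm]
    _ ≤ (9 ^ (2 * p)) ^ d * ∑ j ∈ range (d + 1), (𝔼 ε, ‖f ε‖ ^ p) ^ 2 := by
        gcongr with j hj
        exact h_node j hj
    _ = (9 ^ (2 * p)) ^ d * (d + 1) * (𝔼 ε, ‖f ε‖ ^ p) ^ 2 := by
        simp only [sum_const, card_range, nsmul_eq_mul]
        push_cast
        ring
    _ ≤ (9 ^ (2 * p)) ^ d * 2 ^ d * (𝔼 ε, ‖f ε‖ ^ p) ^ 2 := by gcongr
    _ = (2 * 9 ^ (2 * p)) ^ d * (𝔼 ε, ‖f ε‖ ^ p) ^ 2 := by ring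

end Hypercontractivity

theorem stmt17_general {E : Type*} [NormedAddCommGroup E] [NormedSpace ℝ E] {q : ℝ} (hq : 0 < q)
    {n d : ℕ} (hd : 1 ≤ d) {f : (Fin n → Bool) → E} (hf : HasDegreeLE f d) :
    entropy (fun ε ↦ ‖f ε‖ ^ q) ≤ Real.log (2 * 9 ^ (2 * max q 2)) * d * lpNorm q f ^ q := by
  set p := max q 2
  have hp : 2 ≤ p := le_max_right q 2
  have hqp : q ≤ p := le_max_left q 2
  have hp0 : 0 < p := by linarith
  set K : ℝ := 2 * 9 ^ (2 * p)
  have moment : 𝔼 ε, (‖f ε‖ ^ p) ^ 2 ≤ K ^ d * (𝔼 ε, ‖f ε‖ ^ p) ^ 2 := by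
    simpa only [← Real.rpow_mul_natCast (norm_nonneg _), Nat.cast_ofNat, mul_comm p]
      using hf.expect_norm_rpow_two_mul_le hd hp
  have entropy_p : entropy (fun ε ↦ ‖f ε‖ ^ p) ≤ Real.log (K ^ d) * 𝔼 ε, ‖f ε‖ ^ p :=
    entropy_le_log_mul_expect_of_expect_sq_le (fun ε ↦ by positivity) moment
  have entropy_q := entropy_rpow_le_of_entropy_le (fun ε ↦ by positivity)
    (div_pos hq hp0) ((div_le_one hp0).2 hqp) entropy_p
  simpa only [← Real.rpow_mul (norm_nonneg _), mul_div_cancel₀ q hp0.ne', Real.log_pow,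
    lpNorm_rpow_self hq.ne', mul_comm (d : ℝ)] using entropy_q

/-- **Entropy bound for vector-valued functions of low degree.** -/
theorem stmt17 {X : Type*} [NormedAddCommGroup X] [NormedSpace ℂ X] [CompleteSpace X]
    (q : ℝ) (hq : 0 < q) :
    ∃ C : ℝ, 0 < C ∧
      ∀ n d : ℕ, 1 ≤ d → d ≤ n → ∀ f : (Fin n → Bool) → X, degLE f d →
        entropy (fun ε => ‖f ε‖ ^ q) ≤ C * d * (lpNorm q f) ^ q := by
  refine ⟨Real.log (2 * 9 ^ (2 * max q 2)), Real.log_pos ?_, fun n d hd _ f hf ↦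
    stmt17_general hq hd hf⟩
  linarith [Real.one_le_rpow (x := 9) (z := 2 * max q 2) (by norm_num) (by positivity)]

end HammingCube
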